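/- Let G be a simple graph on n ≥ 3 vertices that is outer 5-planar, i.e., its vertices can be arranged in a cyclic order (equivalently, placed in convex position with straight-line edges) such that every edge is crossed by at most 5 other edges. Then G has at most 4n − 9 edges. -/

import Mathlib

/-- `x` lies strictly between `a` and `b` in the cyclic order of `Fin n`
(going forward from `a` to `b` along the cycle). -/
def cycBtw (n : ℕ) (a b x : Fin n) : Prop :=
  0 < (x.val + n - a.val) % n ∧ (x.val + n - a.val) % n < (b.val + n - a.val) % n

/-- Two edges `e` and `f` cross in the cyclic order determined by the positions `σ`:
they have four distinct endpoints and the endpoints interleave, i.e. exactly one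
endpoint of `f` lies strictly between the endpoints of `e`. -/
def crossing (n : ℕ) (σ : Fin n → Fin n) (e f : Sym2 (Fin n)) : Prop :=
  ∃ a b c d : Fin n, e = s(a, b) ∧ f = s(c, d) ∧
    a ≠ b ∧ c ≠ d ∧ a ≠ c ∧ a ≠ d ∧ b ≠ c ∧ b ≠ d ∧
    (cycBtw n (σ a) (σ b) (σ c) ↔ ¬ cycBtw n (σ a) (σ b) (σ d))

/-- With respect to the cyclic order given by positions `σ`, every edge of `G`
is crossed by at most `k` other edges. -/
def OuterKPlanarOrd (n k : ℕ) (σ : Fin n → Fin n) (G : SimpleGraph (Fin n)) : Prop :=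
  ∀ e ∈ G.edgeSet, ({f ∈ G.edgeSet | crossing n σ e f}).ncard ≤ k

/-- `G` is outer `k`-planar: its vertices can be arranged in a cyclic order such
that every edge is crossed by at most `k` other edges. -/
def IsOuterKPlanar (n k : ℕ) (G : SimpleGraph (Fin n)) : Prop :=
  ∃ σ : Fin n ≃ Fin n, OuterKPlanarOrd n k (⇑σ) G

/-!
In a counterexample with the least number of vertices, contracting an interval of positions gives a
smaller drawing, which by minimality satisfies the bound; so the contraction loses more than four
edges per vertex removed. Contracting two consecutive positions shows that they have at least four
common neighbours.

Take a shortest edge of length at least `5` and reflect it to `(0, l)`. The other edges inside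
the window `[0, l]` have length at most `4`, and every edge leaving the window from an inner
position crosses `(0, l)`, so there are at most five of these. Contracting `[1, l]` now shows that
the number of leaving edges is at least `3` plus the number of pairs at distance at most `4` in the
window that are not edges. Hence at most two such pairs are missing. If `l ≥ 6`, a short edge of the
window is then crossed by more than five of the others. If `l = 5`, this needs in addition the
edges leaving the window which the common neighbours provide.
-/

open Finset

/-- Two chords of a convex polygon, given as pairs of positions with the smaller one first,
cross. -/
abbrev Interleave (e f : ℕ × ℕ) : Prop :=
  (e.1 < f.1 ∧ f.1 < e.2 ∧ e.2 < f.2) ∨ (f.1 < e.1 ∧ e.1 < f.2 ∧ f.2 < e.2)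

/-- An outer `k`-planar drawing on the positions `0, …, n - 1`, as its set of edges, each written
as an increasing pair of positions. -/
structure ConvexDrawing (k n : ℕ) (E : Finset (ℕ × ℕ)) : Prop where
  lt : ∀ e ∈ E, e.1 < e.2
  bound : ∀ e ∈ E, e.2 < n
  crossings : ∀ e ∈ E, #{f ∈ E | Interleave e f} ≤ k

theorem ConvexDrawing.of_image {α : Type*} {k n : ℕ} {F : Finset α} {ψ : α → ℕ × ℕ}
    (lt : ∀ e ∈ F, (ψ e).1 < (ψ e).2) (bound : ∀ e ∈ F, (ψ e).2 < n)
    (crossings : ∀ e ∈ F, #{f ∈ F | Interleave (ψ e) (ψ f)} ≤ k) :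
    ConvexDrawing k n (F.image ψ) where
  lt := forall_mem_image.2 lt
  bound := forall_mem_image.2 bound
  crossings := forall_mem_image.2 fun e he => by
    rw [filter_image]
    exact card_image_le.trans (crossings e he)

/-- A drawing with more than `4n - 9` edges on the least possible number `n` of positions. -/
structure MinimalDense (k n : ℕ) (E : Finset (ℕ × ℕ)) : Prop extends ConvexDrawing k n E where
  three_le : 3 ≤ n
  dense : 4 * n - 9 < #E
  minimal : ∀ m F, 3 ≤ m → m < n → ConvexDrawing k m F → #F ≤ 4 * m - 9

section Reflection

/-- The action on increasing pairs of the reflection `x ↦ b - x` of `ℤ / n`, which exchanges the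
ends of the interval `[0, b]`. -/
def reflectPair (n b : ℕ) (e : ℕ × ℕ) : ℕ × ℕ :=
  if e.2 ≤ b then (b - e.2, b - e.1)
  else if e.1 ≤ b then (b - e.1, n + b - e.2)
  else (n + b - e.2, n + b - e.1)

theorem reflectPair_reflectPair {n b : ℕ} {e : ℕ × ℕ} (lt : e.1 < e.2) (bound : e.2 < n) :
    reflectPair n b (reflectPair n b e) = e := by
  ext <;> simp only [reflectPair] <;> split_ifs <;> simp only at * <;> omega

theorem reflectPair_lt {n b : ℕ} {e : ℕ × ℕ} (lt : e.1 < e.2) (bound : e.2 < n) :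
    (reflectPair n b e).1 < (reflectPair n b e).2 := by
  simp only [reflectPair]
  split_ifs <;> omega

theorem reflectPair_bound {n b : ℕ} {e : ℕ × ℕ} (hb : b < n) (lt : e.1 < e.2) :
    (reflectPair n b e).2 < n := by
  simp only [reflectPair]
  split_ifs <;> omega

theorem Interleave.of_reflect {n b : ℕ} {e f : ℕ × ℕ} (he : e.1 < e.2) (hen : e.2 < n)
    (hf : f.1 < f.2) (hfn : f.2 < n) (h : Interleave (reflectPair n b e) (reflectPair n b f)) :
    Interleave e f := by
  simp only [Interleave, reflectPair] at h ⊢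
  split_ifs at h <;> simp only at h <;> omega

variable {k n b : ℕ} {E : Finset (ℕ × ℕ)}

theorem ConvexDrawing.reflect (h : ConvexDrawing k n E) (hb : b < n) :
    ConvexDrawing k n (E.image (reflectPair n b)) :=
  .of_image (fun e he => reflectPair_lt (h.lt e he) (h.bound e he))
    (fun e he => reflectPair_bound hb (h.lt e he)) fun e he =>
      (card_le_card fun f hf => by
        rw [mem_filter] at hf ⊢
        exact ⟨hf.1, hf.2.of_reflect (h.lt e he) (h.bound e he) (h.lt f hf.1)
          (h.bound f hf.1)⟩).trans (h.crossings e he)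

theorem ConvexDrawing.card_reflect (h : ConvexDrawing k n E) :
    #(E.image (reflectPair n b)) = #E :=
  card_image_of_injOn <| Set.LeftInvOn.injOn (f₁' := reflectPair n b) fun e he =>
    reflectPair_reflectPair (h.lt e he) (h.bound e he)

theorem MinimalDense.reflect (h : MinimalDense k n E) (hb : b < n) :
    MinimalDense k n (E.image (reflectPair n b)) where
  toConvexDrawing := h.toConvexDrawing.reflect hb
  three_le := h.three_le
  dense := by
    rw [h.card_reflect]
    exact h.dense
  minimal := h.minimal

theorem ConvexDrawing.mem_image_reflectPair (h : ConvexDrawing k n E) {x y : ℕ} (hxy : x < y)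
    (hyb : y ≤ b) (hb : b < n) :
    (x, y) ∈ E.image (reflectPair n b) ↔ (b - y, b - x) ∈ E := by
  have key : reflectPair n b (x, y) = (b - y, b - x) := if_pos hyb
  rw [mem_image]
  constructor
  · rintro ⟨e, he, hxy⟩
    rwa [← key, ← hxy, reflectPair_reflectPair (h.lt e he) (h.bound e he)]
  · intro he
    exact ⟨_, he, by rw [← key, reflectPair_reflectPair hxy (by omega)]⟩

end Reflection

section Contraction

/-- The monotone map identifying the positions `p, …, q` and renumbering the later ones. -/
def collapse (p q x : ℕ) : ℕ := max (min x p) (x - (q - p))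

theorem collapse_monotone (p q : ℕ) : Monotone (collapse p q) := by
  intro x y hxy
  simp only [collapse]
  omega

theorem collapse_eq_collapse_iff {p q : ℕ} (hpq : p ≤ q) {x y : ℕ} :
    collapse p q x = collapse p q y ↔ x = y ∨ (p ≤ x ∧ x ≤ q) ∧ p ≤ y ∧ y ≤ q := by
  simp only [collapse]
  omega

variable {k n : ℕ} {E : Finset (ℕ × ℕ)}

theorem ConvexDrawing.image_of_monotone {m : ℕ} (h : ConvexDrawing k n E) {F : Finset (ℕ × ℕ)}
    (hF : F ⊆ E) {φ : ℕ → ℕ} (hφ : Monotone φ) (lt : ∀ e ∈ F, φ e.1 < φ e.2)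
    (bound : ∀ e ∈ F, φ e.2 < m) : ConvexDrawing k m (F.image (Prod.map φ φ)) :=
  .of_image lt bound fun e he =>
    (card_le_card fun f hf => by
      rw [mem_filter] at hf ⊢
      exact ⟨hF hf.1, hf.2.imp (.imp hφ.reflect_lt (.imp hφ.reflect_lt hφ.reflect_lt))
        (.imp hφ.reflect_lt (.imp hφ.reflect_lt hφ.reflect_lt))⟩).trans (h.crossings e (hF he))

theorem MinimalDense.lt_card_of_collapse (h : MinimalDense k n E) {p q : ℕ} (hpq : p < q)
    (hq : q < n) (hn : q - p + 3 ≤ n) {D : Finset (ℕ × ℕ)}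
    (loops : ∀ e ∈ E, p ≤ e.1 → e.2 ≤ q → e ∈ D)
    (inj : Set.InjOn (Prod.map (collapse p q) (collapse p q)) (E \ D : Finset (ℕ × ℕ))) :
    4 * (q - p) < #D := by
  have lt : ∀ e ∈ E \ D, collapse p q e.1 < collapse p q e.2 := by
    intro e he
    rw [mem_sdiff] at he
    have := h.lt e he.1
    refine (collapse_monotone p q this.le).lt_of_ne fun heq => he.2 (loops e he.1 ?_ ?_) <;>
      rw [collapse_eq_collapse_iff hpq.le] at heq <;> omega
  have bound : ∀ e ∈ E \ D, collapse p q e.2 < n - (q - p) := by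
    intro e he
    have := h.bound e (sdiff_subset he)
    simp only [collapse]
    omega
  have few := h.minimal (n - (q - p)) _ (by omega) (by omega)
    (h.image_of_monotone sdiff_subset (collapse_monotone p q) lt bound)
  rw [card_image_of_injOn inj] at few
  have := le_card_sdiff D E
  have := h.dense
  omega

/-- The common neighbours of the consecutive positions `v` and `v + 1`. -/
def commonNbrs (n : ℕ) (E : Finset (ℕ × ℕ)) (v : ℕ) : Finset ℕ :=
  {x ∈ range n | ((x, v) ∈ E ∧ (x, v + 1) ∈ E) ∨ ((v, x) ∈ E ∧ (v + 1, x) ∈ E)}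

theorem mem_commonNbrs (h : ConvexDrawing k n E) {v x : ℕ} :
    x ∈ commonNbrs n E v ↔
      ((x, v) ∈ E ∧ (x, v + 1) ∈ E) ∨ ((v, x) ∈ E ∧ (v + 1, x) ∈ E) := by
  rw [commonNbrs, mem_filter, mem_range, and_iff_right_iff_imp]
  rintro (⟨hx, -⟩ | ⟨hx, -⟩)
  · exact (h.lt _ hx).trans (h.bound _ hx)
  · exact h.bound _ hx

theorem MinimalDense.four_lt_card_of_contract (h : MinimalDense k n E) (hn : 4 ≤ n) {v : ℕ}
    (hv : v + 1 < n) {D : Finset (ℕ × ℕ)} (side : (v, v + 1) ∈ D)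
    (left : ∀ x, (x, v) ∈ E → (x, v + 1) ∈ E → (x, v + 1) ∈ D)
    (right : ∀ x, (v, x) ∈ E → (v + 1, x) ∈ E → (v + 1, x) ∈ D) : 4 < #D := by
  have few := h.lt_card_of_collapse (p := v) (q := v + 1) (D := D) (by omega) hv (by omega) ?_ ?_
  · omega
  · rintro ⟨x, y⟩ he hx hy
    obtain ⟨rfl, rfl⟩ : x = v ∧ y = v + 1 := by
      have := h.lt _ he
      simp only at this hx hy
      omega
    exact side
  · rintro ⟨x, y⟩ he ⟨x', y'⟩ hf heq
    obtain ⟨heE, heD⟩ := mem_sdiff.1 (mem_coe.1 he)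
    obtain ⟨hfE, hfD⟩ := mem_sdiff.1 (mem_coe.1 hf)
    have he_lt := h.lt _ heE
    have hf_lt := h.lt _ hfE
    rw [Prod.map_apply, Prod.map_apply, Prod.mk.injEq, collapse_eq_collapse_iff v.le_succ,
      collapse_eq_collapse_iff v.le_succ] at heq
    simp only at he_lt hf_lt
    by_contra hne
    rw [Prod.mk.injEq] at hne
    have cases : (x = x' ∧ y = v ∧ y' = v + 1) ∨ (x = x' ∧ y = v + 1 ∧ y' = v) ∨
        (y = y' ∧ x = v ∧ x' = v + 1) ∨ (y = y' ∧ x = v + 1 ∧ x' = v) := by omega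
    obtain ⟨rfl, rfl, rfl⟩ | ⟨rfl, rfl, rfl⟩ | ⟨rfl, rfl, rfl⟩ | ⟨rfl, rfl, rfl⟩ := cases
    · exact hfD (left _ heE hfE)
    · exact heD (left _ hfE heE)
    · exact hfD (right _ heE hfE)
    · exact heD (right _ hfE heE)

/-- Contracting `v` and `v + 1` loses only the edge between them and one edge for each common
neighbour. -/
theorem MinimalDense.four_le_card_commonNbrs (h : MinimalDense k n E) (hn : 4 ≤ n) {v : ℕ}
    (hv : v + 1 < n) : 4 ≤ #(commonNbrs n E v) := by
  let ψ : ℕ → ℕ × ℕ := fun x => if x < v then (x, v + 1) else (v + 1, x)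
  have lost : 4 < #(insert (v, v + 1) ((commonNbrs n E v).image ψ)) := by
    refine h.four_lt_card_of_contract hn hv (mem_insert_self _ _) (fun x hx hx' => ?_)
      fun x hx hx' => ?_ <;> refine mem_insert_of_mem (mem_image.2 ⟨x, ?_, ?_⟩)
    · exact (mem_commonNbrs h.toConvexDrawing).2 (.inl ⟨hx, hx'⟩)
    · exact if_pos (h.lt _ hx)
    · exact (mem_commonNbrs h.toConvexDrawing).2 (.inr ⟨hx, hx'⟩)
    · exact if_neg (h.lt _ hx).not_gt
  have := card_insert_le (v, v + 1) ((commonNbrs n E v).image ψ)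
  have := card_image_le (s := commonNbrs n E v) (f := ψ)
  omega

end Contraction

section Window

/-- The pairs of positions in `[0, l]` at distance at most `4`. -/
def shortPairs (l : ℕ) : Finset (ℕ × ℕ) :=
  {e ∈ range (l + 1) ×ˢ range (l + 1) | e.1 < e.2 ∧ e.2 ≤ e.1 + 4}

theorem mem_shortPairs {l : ℕ} {e : ℕ × ℕ} :
    e ∈ shortPairs l ↔ e.1 < e.2 ∧ e.2 ≤ e.1 + 4 ∧ e.2 ≤ l := by
  simp only [shortPairs, mem_filter, mem_product, mem_range]
  omega

theorem shortPairs_mono : Monotone shortPairs := fun l m hlm e he => by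
  rw [mem_shortPairs] at he ⊢
  omega

theorem card_shortPairs_le (l : ℕ) : #(shortPairs l) ≤ l + (l - 1) + (l - 2) + (l - 3) := by
  have cover : shortPairs l ⊆
      (range 4).biUnion fun d => (range (l - d)).image fun i => (i, i + d + 1) := by
    rintro ⟨i, j⟩ hij
    simp only [mem_shortPairs] at hij
    simp only [mem_biUnion, mem_image, mem_range, Prod.mk.injEq]
    exact ⟨j - i - 1, by omega, i, by omega, rfl, by omega⟩
  calc #(shortPairs l)
      ≤ ∑ d ∈ range 4, #((range (l - d)).image fun i => (i, i + d + 1)) :=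
        (card_le_card cover).trans card_biUnion_le
    _ ≤ ∑ d ∈ range 4, (l - d) :=
        sum_le_sum fun d _ => card_image_le.trans (card_range _).le
    _ = l + (l - 1) + (l - 2) + (l - 3) := by simp [sum_range_succ]

/-- A dense drawing on the least number of positions in which `(0, l)` is an edge and every other
edge between positions of `[0, l]` has length at most `4`. -/
structure ShortWindow (k n : ℕ) (E : Finset (ℕ × ℕ)) (l : ℕ) : Prop
    extends MinimalDense k n E where
  mem : (0, l) ∈ E
  five_le : 5 ≤ l
  short : ∀ e ∈ E, e.2 ≤ l → e ≠ (0, l) → e.2 ≤ e.1 + 4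

variable {k n l : ℕ} {E : Finset (ℕ × ℕ)}

theorem MinimalDense.shortWindow_image_reflectPair (h : MinimalDense k n E) {a b : ℕ}
    (hab : (a, b) ∈ E) (five_le : a + 5 ≤ b)
    (short : ∀ e ∈ E, a ≤ e.1 → e.2 ≤ b → e ≠ (a, b) → e.2 ≤ e.1 + 4) :
    ShortWindow k n (E.image (reflectPair n b)) (b - a) where
  toMinimalDense := h.reflect (h.bound _ hab)
  mem := by
    rw [h.mem_image_reflectPair (by omega) (Nat.sub_le b a) (h.bound _ hab), Nat.sub_zero,
      Nat.sub_sub_self (by omega)]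
    exact hab
  five_le := by omega
  short := by
    rintro ⟨x, y⟩ he hy hne
    have hxy := (h.reflect (h.bound _ hab)).lt _ he
    simp only [ne_eq, Prod.mk.injEq] at hxy hy hne ⊢
    rw [h.mem_image_reflectPair hxy (by omega) (h.bound _ hab)] at he
    have := short _ he (by simp only; omega) (by simp only; omega)
      (by simp only [ne_eq, Prod.mk.injEq]; omega)
    simp only at this
    omega

theorem ShortWindow.reflect (h : ShortWindow k n E l) :
    ShortWindow k n (E.image (reflectPair n l)) l :=
  h.shortWindow_image_reflectPair h.mem (by have := h.five_le; omega)
    fun e he _ hel hne => h.short e he hel hne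

theorem MinimalDense.exists_shortWindow (h : MinimalDense k n E) :
    ∃ F l, ShortWindow k n F l := by
  obtain long | long := ({e ∈ E | e.1 + 5 ≤ e.2} : Finset (ℕ × ℕ)).eq_empty_or_nonempty
  · have hE : E ⊆ shortPairs (n - 1) := fun e he => by
      have := filter_eq_empty_iff.1 long he
      have := h.lt e he
      have := h.bound e he
      rw [mem_shortPairs]
      omega
    have := (card_le_card hE).trans (card_shortPairs_le _)
    have := h.dense
    have := h.three_le
    omega
  · obtain ⟨⟨a, b⟩, hab, shortest⟩ := exists_min_image _ (fun e => e.2 - e.1) long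
    rw [mem_filter] at hab
    refine ⟨_, _, h.shortWindow_image_reflectPair hab.1 hab.2 fun e he hae heb hne => ?_⟩
    by_contra! hlong
    have := shortest e (mem_filter.2 ⟨he, hlong⟩)
    rw [ne_eq, Prod.ext_iff] at hne
    omega

theorem ShortWindow.lt_size (h : ShortWindow k n E l) : l < n :=
  h.bound _ h.mem

theorem ShortWindow.add_two_le (h : ShortWindow k n E l) : l + 2 ≤ n := by
  by_contra! hn
  have := h.lt_size
  have hE : E ⊆ insert (0, l) (shortPairs l) := fun e he => by
    have := h.lt e he
    have := h.bound e he
    rw [mem_insert, mem_shortPairs, or_iff_not_imp_left]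
    intro hne
    have := h.short e he (by omega) hne
    omega
  have := (card_le_card hE).trans (card_insert_le _ _)
  have := card_shortPairs_le l
  have := h.dense
  have := h.five_le
  omega

/-- The number of edges from position `i` to positions beyond `l`. -/
def outDeg (E : Finset (ℕ × ℕ)) (l i : ℕ) : ℕ := #{e ∈ E | e.1 = i ∧ l < e.2}

/-- The indicator function of the non-edges, which makes counts of absent edges linear. -/
def missing (E : Finset (ℕ × ℕ)) (e : ℕ × ℕ) : ℕ := if e ∈ E then 0 else 1

theorem missing_eq_zero_iff {e : ℕ × ℕ} : missing E e = 0 ↔ e ∈ E := by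
  simp [missing]

theorem missing_eq_one_iff {e : ℕ × ℕ} : missing E e = 1 ↔ e ∉ E := by
  simp [missing]

theorem card_sdiff_eq_sum_missing (K E : Finset (ℕ × ℕ)) :
    #(K \ E) = ∑ e ∈ K, missing E e := by
  rw [sdiff_eq_filter, card_filter]
  exact sum_congr rfl fun e _ => by simp only [missing, ite_not]

theorem exists_mem_of_outDeg_pos {i : ℕ} (h : 0 < outDeg E l i) : ∃ y, l < y ∧ (i, y) ∈ E := by
  obtain ⟨⟨x, y⟩, hxy⟩ := card_pos.1 h
  obtain ⟨hE, rfl, hy⟩ := mem_filter.1 hxy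
  exact ⟨y, hy, hE⟩

theorem exists_mem_ne_of_one_lt_outDeg {i : ℕ} (h : 1 < outDeg E l i) (z : ℕ) :
    ∃ y, l < y ∧ (i, y) ∈ E ∧ y ≠ z := by
  obtain ⟨⟨x, y⟩, hxy, hne⟩ := exists_mem_ne h (i, z)
  obtain ⟨hE, rfl, hy⟩ := mem_filter.1 hxy
  exact ⟨y, hy, hE, fun hyz => hne (by rw [hyz])⟩

theorem sum_outDeg (E : Finset (ℕ × ℕ)) (l : ℕ) (S : Finset ℕ) :
    ∑ i ∈ S, outDeg E l i = #{e ∈ E | e.1 ∈ S ∧ l < e.2} := by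
  rw [card_eq_sum_card_fiberwise (f := Prod.fst) (t := S)
    fun e he => (mem_filter.1 (mem_coe.1 he)).2.1]
  refine sum_congr rfl fun i hi => congrArg card ?_
  ext e
  simp only [mem_filter]
  constructor
  · rintro ⟨he, rfl, hel⟩
    exact ⟨⟨he, hi, hel⟩, rfl⟩
  · rintro ⟨⟨he, -, hel⟩, rfl⟩
    exact ⟨he, rfl, hel⟩

theorem ConvexDrawing.card_le_add_sum_missing {p q : ℕ} (h : ConvexDrawing k n E)
    (hpq : (p, q) ∈ E) {K : Finset (ℕ × ℕ)} (hK : ∀ e ∈ K, Interleave (p, q) e) :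
    #K ≤ k + ∑ e ∈ K, missing E e := by
  rw [← card_sdiff_eq_sum_missing, ← card_inter_add_card_sdiff K E]
  refine Nat.add_le_add_right ((card_le_card fun e he => ?_).trans (h.crossings _ hpq)) _
  rw [mem_inter] at he
  exact mem_filter.2 ⟨he.2, hK e he.1⟩

theorem ConvexDrawing.card_add_sum_outDeg_le (h : ConvexDrawing k n E) (p q : ℕ)
    (K : Finset (ℕ × ℕ)) (hq : q ≤ l) (hK : ∀ e ∈ K, Interleave (p, q) e ∧ e.2 ≤ l)
    (hpq : (p, q) ∈ E) :
    #K + ∑ i ∈ Ioo p q, outDeg E l i ≤ k + ∑ e ∈ K, missing E e := by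
  have disj : Disjoint (K ∩ E) {e ∈ E | e.1 ∈ Ioo p q ∧ l < e.2} :=
    disjoint_left.2 fun e he he' =>
      (hK e (mem_inter.1 he).1).2.not_gt (mem_filter.1 he').2.2
  have cross : K ∩ E ∪ {e ∈ E | e.1 ∈ Ioo p q ∧ l < e.2} ⊆ {e ∈ E | Interleave (p, q) e} := by
    refine union_subset (fun e he => ?_) fun e he => ?_
    · rw [mem_inter] at he
      exact mem_filter.2 ⟨he.2, (hK e he.1).1⟩
    · rw [mem_filter, mem_Ioo] at he
      exact mem_filter.2 ⟨he.1, .inl ⟨he.2.1.1, he.2.1.2, hq.trans_lt he.2.2⟩⟩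
  have few := (card_le_card cross).trans (h.crossings _ hpq)
  rw [card_union_of_disjoint disj, ← sum_outDeg] at few
  have := card_inter_add_card_sdiff K E
  rw [card_sdiff_eq_sum_missing] at this
  omega

theorem ShortWindow.sum_outDeg_le (h : ShortWindow k n E l) :
    ∑ i ∈ Ioo 0 l, outDeg E l i ≤ k := by
  simpa using h.card_add_sum_outDeg_le 0 l ∅ le_rfl (by simp) h.mem

/-- In a short window, the edges other than `(0, l)` with an end strictly between `0` and `l`. -/
def windowEdges (E : Finset (ℕ × ℕ)) (l : ℕ) : Finset (ℕ × ℕ) :=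
  (shortPairs l ∩ E) ∪ {e ∈ E | e.1 ∈ Ioo 0 l ∧ l < e.2}

theorem ShortWindow.mem_windowEdges (h : ShortWindow k n E l) {e : ℕ × ℕ} (he : e ∈ E) :
    e ∈ windowEdges E l ↔ (e ≠ (0, l) ∧ e.2 ≤ l) ∨ (0 < e.1 ∧ e.1 < l ∧ l < e.2) := by
  have lt := h.lt e he
  have := h.five_le
  simp only [windowEdges, mem_union, mem_inter, mem_filter, mem_shortPairs, mem_Ioo, he, and_true,
    true_and, and_assoc]
  refine or_congr_left ⟨fun hs => ⟨?_, hs.2.2⟩, fun hs => ⟨lt, h.short e he hs.2 hs.1, hs.2⟩⟩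
  rintro rfl
  simp only at hs
  omega

/-- Contracting `[1, l]` to a point loses the window edges, except that an edge `(i, y)` leaving
the window survives if `(l, y)` is not an edge. -/
theorem ShortWindow.lt_card_erase_windowEdges (h : ShortWindow k n E l) {i y : ℕ}
    (hly : (l, y) ∉ E) (hy : l < y) : 4 * (l - 1) < #((windowEdges E l).erase (i, y)) := by
  have := h.five_le
  have := h.add_two_le
  have far : ∀ e ∈ E \ (windowEdges E l).erase (i, y),
      e = (i, y) ∨ (e.1 = 0 ∨ l ≤ e.1) ∧ l ≤ e.2 := by
    intro e he
    obtain ⟨heE, heD⟩ := mem_sdiff.1 he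
    rw [mem_erase, h.mem_windowEdges heE] at heD
    simp only [ne_eq, Prod.ext_iff] at heD ⊢
    omega
  refine h.lt_card_of_collapse (p := 1) (q := l) (by omega) h.lt_size (by omega)
    (fun e he he1 hel => ?_) fun e he f hf heq => ?_
  · rw [mem_erase, h.mem_windowEdges he]
    simp only [ne_eq, Prod.ext_iff]
    omega
  · have he' := far e (mem_coe.1 he)
    have hf' := far f (mem_coe.1 hf)
    have hle : e ≠ (l, y) := fun h => hly (h ▸ (mem_sdiff.1 (mem_coe.1 he)).1)
    have hlf : f ≠ (l, y) := fun h => hly (h ▸ (mem_sdiff.1 (mem_coe.1 hf)).1)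
    simp only [Prod.ext_iff, Prod.map_fst, Prod.map_snd, ne_eq,
      collapse_eq_collapse_iff (show 1 ≤ l by omega)] at *
    omega

theorem sum_missing_add_card_windowEdges_le {K : Finset (ℕ × ℕ)} (hK : K ⊆ shortPairs l) :
    ∑ e ∈ K, missing E e + #(windowEdges E l) ≤
      #(shortPairs l) + ∑ i ∈ Ioo 0 l, outDeg E l i := by
  have := card_union_le (shortPairs l ∩ E) {e ∈ E | e.1 ∈ Ioo 0 l ∧ l < e.2}
  have := card_inter_add_card_sdiff (shortPairs l) E
  have := card_le_card (sdiff_subset_sdiff hK (le_refl E))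
  rw [sum_outDeg, ← card_sdiff_eq_sum_missing, windowEdges]
  omega

theorem ShortWindow.sum_missing_add_three_le (h : ShortWindow k n E l) {K : Finset (ℕ × ℕ)}
    (hK : K ⊆ shortPairs l) :
    ∑ e ∈ K, missing E e + 3 ≤ ∑ i ∈ Ioo 0 l, outDeg E l i := by
  have lost := h.lt_card_erase_windowEdges (i := 0) (y := n) (fun hn => (h.bound _ hn).false)
    h.lt_size
  have := card_erase_le (s := windowEdges E l) (a := (0, n))
  have := sum_missing_add_card_windowEdges_le (E := E) hK
  have := card_shortPairs_le l
  have := h.five_le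
  omega

theorem ShortWindow.sum_missing_add_four_le (h : ShortWindow k n E l) {K : Finset (ℕ × ℕ)}
    (hK : K ⊆ shortPairs l) {i y : ℕ} (hi : i ∈ Ioo 0 l) (hiy : (i, y) ∈ E) (hy : l < y)
    (hly : (l, y) ∉ E) : ∑ e ∈ K, missing E e + 4 ≤ ∑ i ∈ Ioo 0 l, outDeg E l i := by
  have lost := h.lt_card_erase_windowEdges (i := i) hly hy
  rw [mem_Ioo] at hi
  rw [card_erase_of_mem ((h.mem_windowEdges hiy).2 (.inr ⟨hi.1, hi.2, hy⟩))] at lost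
  have := sum_missing_add_card_windowEdges_le (E := E) hK
  have := card_shortPairs_le l
  have := h.five_le
  omega

theorem ConvexDrawing.notMem_commonNbrs_of_lt (h : ConvexDrawing k n E) {v x : ℕ} (hx : x < v)
    (hE : (x, v) ∉ E ∨ (x, v + 1) ∉ E) : x ∉ commonNbrs n E v := by
  rw [mem_commonNbrs h]
  rintro (hc | hc)
  · tauto
  · exact hx.not_gt (h.lt _ hc.1)

theorem ConvexDrawing.notMem_commonNbrs_of_gt (h : ConvexDrawing k n E) {v x : ℕ} (hx : v < x)
    (hE : (v, x) ∉ E ∨ (v + 1, x) ∉ E) : x ∉ commonNbrs n E v := by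
  rw [mem_commonNbrs h]
  rintro (hc | hc)
  · exact hx.not_gt (h.lt _ hc.1)
  · tauto

theorem ConvexDrawing.commonNbrs_subset (h : ConvexDrawing k n E) {v w : ℕ} (hv : v + 1 ≤ l)
    (hw : w ∈ ({v, v + 1} : Finset ℕ)) :
    commonNbrs n E v ⊆
      (range (l + 1) \ {v, v + 1}) ∪ image Prod.snd {e ∈ E | e.1 = w ∧ l < e.2} := by
  intro x hx
  obtain hxl | hxl := le_or_gt x l
  · refine mem_union_left _ (mem_sdiff.2 ⟨mem_range.2 (Nat.lt_succ_of_le hxl), fun hxv => ?_⟩)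
    rw [mem_commonNbrs h] at hx
    rw [mem_insert, mem_singleton] at hxv
    obtain rfl | rfl := hxv <;> obtain ⟨h₁, h₂⟩ | ⟨h₁, h₂⟩ := hx
    · exact (h.lt _ h₁).false
    · exact (h.lt _ h₁).false
    · exact (h.lt _ h₂).false
    · exact (h.lt _ h₂).false
  · refine mem_union_right _ (mem_image.2 ⟨(w, x), mem_filter.2 ⟨?_, rfl, hxl⟩, rfl⟩)
    rw [mem_commonNbrs h] at hx
    rw [mem_insert, mem_singleton] at hw
    obtain hx | hx := hx
    · have := h.lt _ hx.1
      simp only at this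
      omega
    · obtain rfl | rfl := hw
      exacts [hx.1, hx.2]

/-- Four common neighbours of `v` and `v + 1` are required, so those which the window cannot
provide lie beyond `l`. -/
theorem ShortWindow.five_add_card_le (h : ShortWindow k n E l) (v w : ℕ) {B : Finset ℕ}
    (hv : v + 1 ≤ l) (hw : w ∈ ({v, v + 1} : Finset ℕ)) (hBl : B ⊆ range (l + 1) \ {v, v + 1})
    (hB : Disjoint B (commonNbrs n E v)) :
    5 + #B ≤ l + outDeg E l w := by
  let outer : Finset ℕ := image Prod.snd {e ∈ E | e.1 = w ∧ l < e.2}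
  have cover : commonNbrs n E v ⊆ ((range (l + 1) \ {v, v + 1}) \ B) ∪ outer := by
    refine (subset_sdiff.2 ⟨h.commonNbrs_subset hv hw, hB.symm⟩).trans ?_
    rw [union_sdiff_distrib]
    exact union_subset_union_right sdiff_subset
  have inside : #(range (l + 1) \ {v, v + 1}) = l - 1 := by
    rw [card_sdiff_of_subset, card_range, card_pair v.lt_succ_self.ne]
    · omega
    · simp only [insert_subset_iff, singleton_subset_iff, mem_range]
      omega
  have := h.add_two_le
  have := h.five_le
  have := (h.four_le_card_commonNbrs (v := v) (by omega) (by omega)).trans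
    ((card_le_card cover).trans (card_union_le _ _))
  rw [card_sdiff_of_subset hBl, inside] at this
  have := card_le_card hBl
  have : #outer ≤ outDeg E l w := card_image_le
  omega

end Window

section Cases

variable {n l : ℕ} {E : Finset (ℕ × ℕ)}

theorem ShortWindow.sum_missing_le_two (h : ShortWindow 5 n E l) {K : Finset (ℕ × ℕ)}
    (hK : K ⊆ shortPairs l) : ∑ e ∈ K, missing E e ≤ 2 := by
  have := h.sum_missing_add_three_le hK
  have := h.sum_outDeg_le
  omega

theorem ShortWindow.lt_seven (h : ShortWindow 5 n E l) : l < 7 := by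
  by_contra! hl
  have few {K : Finset (ℕ × ℕ)} (hK : K ⊆ shortPairs 7) : ∑ e ∈ K, missing E e ≤ 2 :=
    h.sum_missing_le_two (hK.trans (shortPairs_mono hl))
  have h15 : (1, 5) ∉ E := fun h15 => by
    have := h.card_le_add_sum_missing h15
      (K := {(0, 2), (0, 3), (0, 4), (2, 6), (3, 6), (3, 7), (4, 6), (4, 7)}) (by decide)
    have := this.trans (Nat.add_le_add_left (few (by decide)) 5)
    contradiction
  have h26 : (2, 6) ∉ E := fun h26 => by
    have := h.card_le_add_sum_missing h26
      (K := {(0, 3), (1, 3), (0, 4), (1, 4), (1, 5), (3, 7), (4, 7), (5, 7)}) (by decide)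
    have := this.trans (Nat.add_le_add_left (few (by decide)) 5)
    contradiction
  have h14 : (1, 4) ∉ E := fun h14 => by
    let K : Finset (ℕ × ℕ) := {(0, 2), (0, 3), (2, 5), (2, 6), (3, 5), (3, 6), (3, 7)}
    have cross : 7 ≤ 5 + ∑ e ∈ K, missing E e := h.card_le_add_sum_missing h14 (K := K) (by decide)
    have := few (K := insert (1, 5) K) (by decide)
    rw [sum_insert (by decide), missing_eq_one_iff.2 h15] at this
    omega
  have := few (K := {(1, 4), (1, 5), (2, 6)}) (by decide)
  simp [missing, h14, h15, h26] at this

theorem ShortWindow.zero_three_mem_of_six (h : ShortWindow 5 n E 6) : (0, 3) ∈ E := by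
  by_contra h03
  have few := h.sum_missing_add_three_le (K := {(0, 2), (0, 3), (0, 4), (1, 3), (1, 4), (1, 5),
    (2, 4), (2, 5), (2, 6), (3, 5), (3, 6)}) (by decide)
  have total := h.sum_outDeg_le
  have cross02 := h.card_add_sum_outDeg_le (l := 6) 0 2 {(1, 3), (1, 4), (1, 5)}
    (by decide) (by decide)
  have cross04 := h.card_add_sum_outDeg_le (l := 6) 0 4 {(1, 5), (2, 5), (2, 6), (3, 5), (3, 6)}
    (by decide) (by decide)
  have cross14 := h.card_add_sum_outDeg_le (l := 6) 1 4
    {(0, 2), (0, 3), (2, 5), (2, 6), (3, 5), (3, 6)} (by decide) (by decide)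
  have cross26 := h.card_add_sum_outDeg_le (l := 6) 2 6 {(0, 3), (1, 3), (0, 4), (1, 4), (1, 5)}
    (by decide) (by decide)
  have cross36 := h.card_add_sum_outDeg_le (l := 6) 3 6 {(0, 4), (1, 4), (2, 4), (1, 5), (2, 5)}
    (by decide) (by decide)
  simp (disch := decide) only [← missing_eq_zero_iff, Ioo_ofNat_ofNat, Nat.reduceAdd, sum_insert,
    sum_singleton, card_insert_of_notMem, card_singleton]
    at h03 few total cross02 cross04 cross14 cross26 cross36
  have h36 : missing E (3, 6) = 0 := by
    by_contra h36
    have := cross04 (by omega)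
    have := cross26 (by omega)
    omega
  have h04 : missing E (0, 4) ≠ 0 := fun h04 => by
    have := cross04 h04
    have := cross36 h36
    omega
  have := cross36 h36
  have := cross14 (by omega)
  have := cross02 (by omega)
  omega

theorem ShortWindow.ne_six (h : ShortWindow 5 n E l) : l ≠ 6 := by
  rintro rfl
  have h03 := h.zero_three_mem_of_six
  have h36 : (3, 6) ∈ E :=
    (h.mem_image_reflectPair (by decide) (by decide) h.lt_size).1 h.reflect.zero_three_mem_of_six
  have few := h.sum_missing_add_three_le (K := {(0, 2), (0, 4), (1, 4), (1, 5), (2, 4), (2, 5),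
    (2, 6), (3, 5), (1, 3), (4, 6)}) (by decide)
  have total := h.sum_outDeg_le
  have cross03 := h.card_add_sum_outDeg_le (l := 6) 0 3 {(1, 4), (1, 5), (2, 4), (2, 5), (2, 6)}
    (by decide) (by decide) h03
  have cross36 := h.card_add_sum_outDeg_le (l := 6) 3 6 {(0, 4), (1, 4), (2, 4), (1, 5), (2, 5)}
    (by decide) (by decide) h36
  have cross14 := h.card_add_sum_outDeg_le (l := 6) 1 4
    {(0, 2), (0, 3), (2, 5), (2, 6), (3, 5), (3, 6)} (by decide) (by decide)
  have cross25 := h.card_add_sum_outDeg_le (l := 6) 2 5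
    {(0, 3), (1, 3), (0, 4), (1, 4), (3, 6), (4, 6)} (by decide) (by decide)
  have cross15 := h.card_add_sum_outDeg_le (l := 6) 1 5
    {(0, 2), (0, 3), (0, 4), (2, 6), (3, 6), (4, 6)} (by decide) (by decide)
  simp (disch := decide) only [← missing_eq_zero_iff, Ioo_ofNat_ofNat, Nat.reduceAdd, sum_insert,
    sum_singleton, card_insert_of_notMem, card_singleton]
    at h03 h36 few total cross03 cross36 cross14 cross25 cross15
  have h15 : missing E (1, 5) ≠ 0 := fun h15 => by
    have := cross15 h15
    omega
  have h14 : missing E (1, 4) ≠ 0 := fun h14 => by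
    have := cross14 h14
    omega
  have h25 : missing E (2, 5) ≠ 0 := fun h25 => by
    have := cross25 h25
    omega
  omega

theorem ShortWindow.one_le_outDeg_of_five (h : ShortWindow 5 n E 5) (h03 : (0, 3) ∉ E) :
    1 ≤ outDeg E 5 2 ∧ 1 ≤ outDeg E 5 3 ∧ 1 ≤ outDeg E 5 4 := by
  have not2 : Disjoint {0} (commonNbrs n E 2) :=
    disjoint_singleton_left.2 (h.notMem_commonNbrs_of_lt (by decide) (.inr h03))
  have not3 : Disjoint {0} (commonNbrs n E 3) :=
    disjoint_singleton_left.2 (h.notMem_commonNbrs_of_lt (by decide) (.inl h03))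
  have out2 := h.five_add_card_le 2 2 (by decide) (by decide) (by decide) not2
  have out3 := h.five_add_card_le 2 3 (by decide) (by decide) (by decide) not2
  have out4 := h.five_add_card_le 3 4 (by decide) (by decide) (by decide) not3
  rw [card_singleton] at out2 out3 out4
  omega

theorem ShortWindow.zero_four_notMem_of_five (h : ShortWindow 5 n E 5) (h03 : (0, 3) ∉ E) :
    (0, 4) ∉ E := by
  intro h04
  obtain ⟨out2, out3, out4⟩ := h.one_le_outDeg_of_five h03
  have few := h.sum_missing_add_three_le (K := {(0, 2), (0, 3), (1, 3), (1, 4), (1, 5), (2, 5),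
    (3, 5)}) (by decide)
  have total := h.sum_outDeg_le
  have cross04 := h.card_add_sum_outDeg_le (l := 5) 0 4 {(1, 5), (2, 5), (3, 5)}
    (by decide) (by decide) h04
  have cross15 := h.card_add_sum_outDeg_le (l := 5) 1 5 {(0, 2), (0, 3), (0, 4)}
    (by decide) (by decide)
  have cross25 := h.card_add_sum_outDeg_le (l := 5) 2 5 {(0, 3), (1, 3), (0, 4), (1, 4)}
    (by decide) (by decide)
  simp (disch := decide) only [← missing_eq_zero_iff, Ioo_ofNat_ofNat, Nat.reduceAdd, sum_insert,
    sum_singleton, card_insert_of_notMem, card_singleton]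
    at h03 h04 few total cross04 cross15 cross25
  have h25 : missing E (2, 5) ≠ 0 := fun h25 => by
    have := cross25 h25
    omega
  have := cross15 (by omega)
  omega

theorem ShortWindow.two_le_outDeg_of_five (h : ShortWindow 5 n E 5) (h03 : (0, 3) ∉ E) :
    2 ≤ outDeg E 5 1 := by
  have not0 : Disjoint {3, 4} (commonNbrs n E 0) :=
    disjoint_insert_left.2 ⟨h.notMem_commonNbrs_of_gt (by decide) (.inl h03),
      disjoint_singleton_left.2 <|
        h.notMem_commonNbrs_of_gt (by decide) (.inl (h.zero_four_notMem_of_five h03))⟩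
  have out1 := h.five_add_card_le 0 1 (by decide) (by decide) (by decide) not0
  rw [card_pair (by decide)] at out1
  omega

theorem ShortWindow.five_mem_of_one_mem (h : ShortWindow 5 n E 5) (h03 : (0, 3) ∉ E) {y : ℕ}
    (hy : 5 < y) (h1y : (1, y) ∈ E) : (5, y) ∈ E := by
  by_contra h5y
  have few := h.sum_missing_add_four_le (K := {(0, 3), (0, 4)}) (by decide) (by decide) h1y hy h5y
  have total := h.sum_outDeg_le
  rw [sum_pair (by decide), missing_eq_one_iff.2 h03,
    missing_eq_one_iff.2 (h.zero_four_notMem_of_five h03)] at few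
  omega

theorem ShortWindow.zero_three_mem_of_five (h : ShortWindow 5 n E 5) : (0, 3) ∈ E := by
  by_contra h03
  have h04 := h.zero_four_notMem_of_five h03
  have few := h.sum_missing_le_two (K := {(0, 3), (0, 4), (1, 4), (2, 4), (1, 5), (2, 5)})
    (by decide)
  obtain ⟨z, hz, h3z⟩ := exists_mem_of_outDeg_pos (h.one_le_outDeg_of_five h03).2.1
  obtain ⟨y, hy, h1y, hyz⟩ := exists_mem_ne_of_one_lt_outDeg (h.two_le_outDeg_of_five h03) z
  have h5y := h.five_mem_of_one_mem h03 hy h1y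
  -- `(3, z)` is crossed by `(0, 5)`, by four short pairs and by one of `(1, y)` and `(5, y)`.
  obtain ⟨c, hcE, hcl, hc⟩ : ∃ c ∈ E, 5 < c.2 ∧ Interleave (3, z) c := by
    obtain hyz | hyz := lt_or_gt_of_ne hyz
    · exact ⟨_, h1y, hy, .inr ⟨by norm_num, by simp only; omega, hyz⟩⟩
    · exact ⟨_, h5y, hy, .inl ⟨by norm_num, hz, hyz⟩⟩
  have cross := h.card_le_add_sum_missing h3z
    (K := insert c {(0, 5), (1, 4), (2, 4), (1, 5), (2, 5)}) (by
      simp only [mem_insert, mem_singleton]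
      rintro e (rfl | rfl | rfl | rfl | rfl | rfl)
      · exact hc
      all_goals
        simp only [Interleave]
        omega)
  have hcK : c ∉ ({(0, 5), (1, 4), (2, 4), (1, 5), (2, 5)} : Finset (ℕ × ℕ)) := by
    intro hcK
    simp only [mem_insert, mem_singleton] at hcK
    obtain rfl | rfl | rfl | rfl | rfl := hcK <;> simp at hcl
  rw [card_insert_of_notMem hcK, sum_insert hcK, missing_eq_zero_iff.2 hcE] at cross
  have h05 := missing_eq_zero_iff.2 h.mem
  rw [← missing_eq_one_iff] at h03 h04
  simp (disch := decide) only [sum_insert, sum_singleton, card_insert_of_notMem,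
    card_singleton] at cross few
  omega

theorem ShortWindow.one_four_notMem_of_five (h : ShortWindow 5 n E 5) (h03 : (0, 3) ∈ E)
    (h25 : (2, 5) ∈ E) : (1, 4) ∉ E := by
  have few := h.sum_missing_add_three_le (K := {(0, 4), (1, 3), (1, 4), (1, 5), (2, 4)})
    (by decide)
  have cross03 := h.card_add_sum_outDeg_le (l := 5) 0 3 {(1, 4), (1, 5), (2, 4), (2, 5)}
    (by decide) (by decide) h03
  have cross25 := h.card_add_sum_outDeg_le (l := 5) 2 5 {(0, 3), (1, 3), (0, 4), (1, 4)}
    (by decide) (by decide) h25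
  simp (disch := decide) only [← missing_eq_zero_iff, Ioo_ofNat_ofNat, Nat.reduceAdd, sum_insert,
    sum_singleton, card_insert_of_notMem, card_singleton] at h03 h25 few cross03 cross25 ⊢
  omega

theorem ShortWindow.zero_four_mem_of_five (h : ShortWindow 5 n E 5) (h03 : (0, 3) ∈ E)
    (h25 : (2, 5) ∈ E) : (0, 4) ∈ E := by
  by_contra h04
  have h14 := h.one_four_notMem_of_five h03 h25
  have not3 : Disjoint {0, 1} (commonNbrs n E 3) :=
    disjoint_insert_left.2 ⟨h.notMem_commonNbrs_of_lt (by decide) (.inr h04),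
      disjoint_singleton_left.2 (h.notMem_commonNbrs_of_lt (by decide) (.inr h14))⟩
  have out3 := h.five_add_card_le 3 3 (by decide) (by decide) (by decide) not3
  have out4 := h.five_add_card_le 3 4 (by decide) (by decide) (by decide) not3
  have few := h.sum_missing_le_two (K := {(0, 4), (1, 3), (1, 4)}) (by decide)
  have cross25 := h.card_add_sum_outDeg_le (l := 5) 2 5 {(0, 3), (1, 3), (0, 4), (1, 4)}
    (by decide) (by decide) h25
  simp (disch := decide) only [← missing_eq_zero_iff, Ioo_ofNat_ofNat, Nat.reduceAdd, sum_insert,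
    sum_singleton, card_insert_of_notMem, card_singleton] at h03 h04 h14 out3 out4 few cross25
  omega

theorem ShortWindow.ne_five (h : ShortWindow 5 n E l) : l ≠ 5 := by
  rintro rfl
  have mirror {x y : ℕ} (hxy : x < y) (hy : y ≤ 5) := h.mem_image_reflectPair hxy hy h.lt_size
  have h03 := h.zero_three_mem_of_five
  have h25 : (2, 5) ∈ E := (mirror (by decide) (by decide)).1 h.reflect.zero_three_mem_of_five
  have h14 := h.one_four_notMem_of_five h03 h25
  have h04 := h.zero_four_mem_of_five h03 h25
  have h15 : (1, 5) ∈ E := (mirror (by decide) (by decide)).1 <| h.reflect.zero_four_mem_of_five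
    ((mirror (by decide) (by decide)).2 h25) ((mirror (by decide) (by decide)).2 h03)
  have not3 : Disjoint {1} (commonNbrs n E 3) :=
    disjoint_singleton_left.2 (h.notMem_commonNbrs_of_lt (by decide) (.inr h14))
  have out3 := h.five_add_card_le 3 3 (by decide) (by decide) (by decide) not3
  have few := h.sum_missing_add_three_le (K := {(1, 3), (1, 4), (2, 4), (3, 5)}) (by decide)
  have cross25 := h.card_add_sum_outDeg_le (l := 5) 2 5 {(0, 3), (1, 3), (0, 4), (1, 4)}
    (by decide) (by decide) h25
  have cross04 := h.card_add_sum_outDeg_le (l := 5) 0 4 {(1, 5), (2, 5), (3, 5)}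
    (by decide) (by decide) h04
  simp (disch := decide) only [← missing_eq_zero_iff, Ioo_ofNat_ofNat, Nat.reduceAdd, sum_insert,
    sum_singleton, card_insert_of_notMem, card_singleton]
    at h03 h25 h14 h04 h15 out3 few cross25 cross04
  omega

theorem not_minimalDense_five : ¬ MinimalDense 5 n E := fun h => by
  obtain ⟨F, l, hF⟩ := h.exists_shortWindow
  have := hF.five_le
  have := hF.lt_seven
  have := hF.ne_five
  have := hF.ne_six
  omega

theorem ConvexDrawing.card_le (hn : 3 ≤ n) (h : ConvexDrawing 5 n E) : #E ≤ 4 * n - 9 := by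
  induction n using Nat.strong_induction_on generalizing E with
  | _ n ih =>
    by_contra! dense
    exact not_minimalDense_five ⟨h, hn, dense, fun m F hm hmn hF => ih m hmn hm hF⟩

end Cases

section Bridge

variable {n k : ℕ} {σ : Fin n → Fin n}

theorem cycBtw_iff {a b x : Fin n} (hab : a < b) : cycBtw n a b x ↔ a < x ∧ x < b := by
  have forward : ∀ y : Fin n, (y.val + n - a.val) % n =
      if a.val ≤ y.val then y.val - a.val else y.val + n - a.val := by
    intro y
    split_ifs with h
    · rw [show y.val + n - a.val = (y.val - a.val) + n by omega, Nat.add_mod_right,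
        Nat.mod_eq_of_lt (by omega)]
    · exact Nat.mod_eq_of_lt (by omega)
  simp only [cycBtw, forward, Fin.lt_def] at hab ⊢
  split_ifs <;> omega

/-- The positions under `σ` of the ends of an edge, the smaller one first. -/
def posPair (σ : Fin n → Fin n) : Sym2 (Fin n) → ℕ × ℕ :=
  Sym2.lift ⟨fun a b => (min (σ a : ℕ) (σ b), max (σ a : ℕ) (σ b)), fun a b => by
    simp only [min_comm, max_comm]⟩

theorem posPair_mk (σ : Fin n → Fin n) (a b : Fin n) :
    posPair σ s(a, b) = (min (σ a : ℕ) (σ b), max (σ a : ℕ) (σ b)) := rfl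

theorem exists_mk_lt (hσ : σ.Injective) {e : Sym2 (Fin n)} (he : ¬ e.IsDiag) :
    ∃ a b, e = s(a, b) ∧ σ a < σ b := by
  induction e with | _ a b
  obtain h | h := lt_or_gt_of_ne (hσ.ne (Sym2.mk_isDiag_iff.not.1 he))
  · exact ⟨a, b, rfl, h⟩
  · exact ⟨b, a, Sym2.eq_swap, h⟩

theorem posPair_mk_of_lt {a b : Fin n} (hab : σ a < σ b) :
    posPair σ s(a, b) = ((σ a : ℕ), (σ b : ℕ)) := by
  rw [posPair_mk, min_eq_left (Fin.le_def.1 hab.le), max_eq_right (Fin.le_def.1 hab.le)]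

theorem posPair_injective (hσ : σ.Injective) : (posPair σ).Injective := by
  intro e f h
  induction e with | _ a b
  induction f with | _ c d
  rw [posPair_mk, posPair_mk, Prod.mk.injEq] at h
  have ends : (σ a : ℕ) = σ c ∧ (σ b : ℕ) = σ d ∨ (σ a : ℕ) = σ d ∧ (σ b : ℕ) = σ c := by omega
  simpa only [Sym2.eq_iff, Fin.val_inj, hσ.eq_iff] using ends

theorem crossing_of_interleave (hσ : σ.Injective) {e f : Sym2 (Fin n)} (he : ¬ e.IsDiag)
    (hf : ¬ f.IsDiag) (h : Interleave (posPair σ e) (posPair σ f)) : crossing n σ e f := by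
  obtain ⟨a, b, rfl, hab⟩ := exists_mk_lt hσ he
  obtain ⟨c, d, rfl, hcd⟩ := exists_mk_lt hσ hf
  rw [posPair_mk_of_lt hab, posPair_mk_of_lt hcd] at h
  simp only [Interleave, Fin.lt_def] at h hab hcd
  refine ⟨a, b, c, d, rfl, rfl, ?_, ?_, ?_, ?_, ?_, ?_, ?_⟩
  iterate 6 rintro rfl; omega
  rw [cycBtw_iff hab, cycBtw_iff hab]
  simp only [Fin.lt_def]
  omega

theorem OuterKPlanarOrd.convexDrawing (hσ : σ.Injective) {G : SimpleGraph (Fin n)}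
    (h : OuterKPlanarOrd n k σ G) :
    ConvexDrawing k n (G.edgeSet.toFinite.toFinset.image (posPair σ)) := by
  refine .of_image ?_ ?_ ?_ <;> intro e he <;> rw [Set.Finite.mem_toFinset] at he
  · obtain ⟨a, b, rfl, hab⟩ := exists_mk_lt hσ (G.not_isDiag_of_mem_edgeSet he)
    rwa [posPair_mk_of_lt hab]
  · obtain ⟨a, b, rfl, hab⟩ := exists_mk_lt hσ (G.not_isDiag_of_mem_edgeSet he)
    rw [posPair_mk_of_lt hab]
    exact (σ b).isLt
  · refine le_trans ?_ (h e he)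
    rw [Set.ncard_eq_toFinset_card _ (Set.toFinite _)]
    refine card_le_card fun f hf => ?_
    rw [mem_filter, Set.Finite.mem_toFinset] at hf
    exact (Set.Finite.mem_toFinset _).2 ⟨hf.1, crossing_of_interleave hσ
      (G.not_isDiag_of_mem_edgeSet he) (G.not_isDiag_of_mem_edgeSet hf.1) hf.2⟩

end Bridge

/-- An `n`-vertex outer `5`-planar graph has at most `4n - 9` edges. -/
theorem outer_five_planar_edge_bound (n : ℕ) (hn : 3 ≤ n) (G : SimpleGraph (Fin n))
    (hG : IsOuterKPlanar n 5 G) :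
    G.edgeSet.ncard ≤ 4 * n - 9 := by
  obtain ⟨σ, hσ⟩ := hG
  have := (hσ.convexDrawing σ.injective).card_le hn
  rwa [card_image_of_injective _ (posPair_injective σ.injective),
    ← Set.ncard_eq_toFinset_card] at this
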